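/- Let A be a skew left brace such that A = B + C is a factorization through left ideals B and C which are trivial as skew left braces. Then B*C and C*B are strong left ideals of A, and both B*C and C*B are trivial as skew left braces. -/

import Mathlib

/-- A skew left brace: `(A,+)` and `(A,∘)` are groups (sharing the same identity `0`)
such that `a ∘ (b + c) = a ∘ b - a + a ∘ c`.  Here `circ` is the operation `∘` and
`cinv a` is the inverse of `a` in `(A,∘)`. -/
class SkewBrace (A : Type*) extends AddGroup A where
  circ : A → A → A
  cinv : A → A
  circ_assoc : ∀ a b c : A, circ (circ a b) c = circ a (circ b c)
  zero_circ : ∀ a : A, circ 0 a = a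
  circ_zero : ∀ a : A, circ a 0 = a
  cinv_circ : ∀ a : A, circ (cinv a) a = 0
  circ_cinv : ∀ a : A, circ a (cinv a) = 0
  compat : ∀ a b c : A, circ a (b + c) = circ a b + -a + circ a c

open SkewBrace

/-- `lam a b = -a + a ∘ b`. -/
def lam {A : Type*} [SkewBrace A] (a b : A) : A := -a + circ a b

/-- The star operation `a * b = lam a b - b = -a + a ∘ b - b`. -/
def bstar {A : Type*} [SkewBrace A] (a b : A) : A := lam a b - b

/-- `X * Y`: the subgroup of `(A,+)` generated by `{x * y : x ∈ X, y ∈ Y}`. -/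
def starSpan {A : Type*} [SkewBrace A] (X Y : Set A) : AddSubgroup A :=
  AddSubgroup.closure {z | ∃ x ∈ X, ∃ y ∈ Y, z = bstar x y}

/-- The right series of `st`: `rseriesOf st 0 = A = A^(1)` and
`rseriesOf st n = A^(n+1)`, so that `A^(n+1) = A^(n) * A`. -/
def rseriesOf {G : Type*} [AddGroup G] (st : G → G → G) : ℕ → AddSubgroup G
  | 0 => ⊤
  | n + 1 => AddSubgroup.closure {z | ∃ u ∈ rseriesOf st n, ∃ a : G, z = st u a}

theorem lam_add' {A : Type*} [SkewBrace A] (a b c : A) : lam a (b + c) = lam a b + lam a c := by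
  simp [lam, compat, add_assoc]

theorem lam_zero' {A : Type*} [SkewBrace A] (a : A) : lam a 0 = 0 := by
  simp [lam, circ_zero]

theorem lam_neg' {A : Type*} [SkewBrace A] (a b : A) : lam a (-b) = - lam a b := by
  apply eq_neg_of_add_eq_zero_left
  rw [← lam_add', neg_add_cancel, lam_zero']

theorem circ_eq' {A : Type*} [SkewBrace A] (a b : A) : circ a b = a + lam a b := by
  simp [lam]

theorem lam_circ' {A : Type*} [SkewBrace A] (a b c : A) :
    lam (circ a b) c = lam a (lam b c) := by
  have h : circ (circ a b) c = circ a (circ b c) := circ_assoc a b c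
  rw [circ_eq' (circ a b) c, circ_eq' b c, circ_eq' a (b + lam b c), lam_add', circ_eq' a b,
    ← add_assoc] at h
  rw [circ_eq' a b]
  exact add_left_cancel h

theorem half7 {A : Type*} [SkewBrace A] (B C : AddSubgroup A)
    (hC : ∀ a : A, ∀ x ∈ C, lam a x ∈ C)
    (hBtriv : ∀ x ∈ B, ∀ y ∈ B, x + y = circ x y)
    (hCtriv : ∀ x ∈ C, ∀ y ∈ C, x + y = circ x y)
    (hfact : ∀ a : A, ∃ b ∈ B, ∃ c ∈ C, a = b + c)
    (hfact' : ∀ a : A, ∃ c ∈ C, ∃ b ∈ B, a = c + b) :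
    (∀ a : A, ∀ x ∈ starSpan (B : Set A) (C : Set A), lam a x ∈ starSpan (B : Set A) (C : Set A)) ∧
    (starSpan (B : Set A) (C : Set A)).Normal ∧
    (∀ x ∈ starSpan (B : Set A) (C : Set A), ∀ y ∈ starSpan (B : Set A) (C : Set A),
      x + y = circ x y) := by
  have gen : ∀ b ∈ B, ∀ c ∈ C, bstar b c ∈ starSpan (B : Set A) (C : Set A) := fun b hb c hc =>
    AddSubgroup.subset_closure ⟨b, hb, c, hc, rfl⟩
  have hle : starSpan (B : Set A) (C : Set A) ≤ C := by
    refine (AddSubgroup.closure_le _).2 ?_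
    rintro _ ⟨b, hb, c, hc, rfl⟩
    exact C.sub_mem (hC b c hc) hc
  have fixB : ∀ x ∈ B, ∀ y ∈ B, lam x y = y := fun x hx y hy => by
    simp [lam, ← hBtriv x hx y hy]
  have fixC : ∀ x ∈ C, ∀ y ∈ C, lam x y = y := fun x hx y hy => by
    simp [lam, ← hCtriv x hx y hy]
  refine ⟨?_, ⟨?_⟩, fun x hx y hy => hCtriv x (hle hx) y (hle hy)⟩
  · intro a x hx
    obtain ⟨b, hb, c, hc, rfl⟩ := hfact a
    have hd := hC (cinv b) c hc
    have e : b + c = circ b (lam (cinv b) c) := by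
      rw [circ_eq', ← lam_circ', circ_cinv]
      simp [lam, zero_circ]
    rw [e, lam_circ', fixC _ hd x (hle hx)]
    clear e hd
    induction hx using AddSubgroup.closure_induction with
    | mem x h =>
      obtain ⟨b', hb', c', hc', rfl⟩ := h
      have e : lam b (bstar b' c') = bstar (b + b') c' - bstar b c' := by
        rw [hBtriv b hb b' hb']
        simp only [bstar, lam_circ', sub_eq_add_neg, lam_add', lam_neg', neg_add_rev, neg_neg,
          add_assoc, neg_add_cancel_left]
      rw [e]
      exact AddSubgroup.sub_mem _ (gen _ (B.add_mem hb hb') _ hc') (gen _ hb _ hc')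
    | zero => rw [lam_zero']; exact AddSubgroup.zero_mem _
    | add x y _ _ h1 h2 => rw [lam_add']; exact AddSubgroup.add_mem _ h1 h2
    | neg x _ h => rw [lam_neg']; exact AddSubgroup.neg_mem _ h
  · have ext : ∀ g : A, (∀ b ∈ B, ∀ c ∈ C, g + bstar b c + -g ∈ starSpan (B : Set A) (C : Set A)) →
        ∀ x ∈ starSpan (B : Set A) (C : Set A), g + x + -g ∈ starSpan (B : Set A) (C : Set A) := by
      intro g hg x hx
      induction hx using AddSubgroup.closure_induction with
      | mem x h =>
        obtain ⟨b', hb', c', hc', rfl⟩ := h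
        exact hg b' hb' c' hc'
      | zero => simp
      | add x y _ _ h1 h2 =>
        have := AddSubgroup.add_mem _ h1 h2
        simpa [add_assoc] using this
      | neg x _ h =>
        have := AddSubgroup.neg_mem _ h
        simpa [add_assoc] using this
    intro x hx g
    obtain ⟨b, hb, c, hc, rfl⟩ := hfact g
    have h1 : c + x + -c ∈ starSpan (B : Set A) (C : Set A) := by
      refine ext c ?_ x hx
      intro b' hb' c' hc'
      have e : c + bstar b' c' + -c = -bstar b' c + bstar b' (c + c') := by
        simp [bstar, lam_add', sub_eq_add_neg, add_assoc]
      rw [e]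
      exact AddSubgroup.add_mem _ (AddSubgroup.neg_mem _ (gen _ hb' _ hc))
        (gen _ hb' _ (C.add_mem hc hc'))
    have h2 : b + (c + x + -c) + -b ∈ starSpan (B : Set A) (C : Set A) := by
      refine ext b ?_ _ h1
      intro b' hb' c' hc'
      obtain ⟨c1, hc1, b1, hb1, e⟩ := hfact' (b + c')
      have e2 : b + lam b' c' = lam b' c1 + b1 := by
        have := congrArg (lam b') e
        rwa [lam_add', lam_add', fixB b' hb' b hb, fixB b' hb' b1 hb1] at this
      have e3 : b + bstar b' c' + -b = bstar b' c1 := by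
        calc b + bstar b' c' + -b = (b + lam b' c') + -(b + c') := by
              simp [bstar, sub_eq_add_neg, add_assoc]
          _ = (lam b' c1 + b1) + -(c1 + b1) := by rw [e2, e]
          _ = bstar b' c1 := by simp [bstar, sub_eq_add_neg, add_assoc]
      rw [e3]
      exact gen _ hb' _ hc1
    simpa [add_assoc] using h2

/-- if `A = B + C` is a factorization through left ideals which are trivial
as skew braces, then `B*C` and `C*B` are strong left ideals of `A` (left ideals that are
normal subgroups of `(A,+)`) and both are trivial as skew braces. -/
theorem stmt7 {A : Type*} [SkewBrace A] (B C : AddSubgroup A)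
    (hB : ∀ a : A, ∀ x ∈ B, lam a x ∈ B)
    (hC : ∀ a : A, ∀ x ∈ C, lam a x ∈ C)
    (hBtriv : ∀ x ∈ B, ∀ y ∈ B, x + y = circ x y)
    (hCtriv : ∀ x ∈ C, ∀ y ∈ C, x + y = circ x y)
    (hfact : ∀ a : A, ∃ b ∈ B, ∃ c ∈ C, a = b + c) :
    (∀ a : A, ∀ x ∈ starSpan (B : Set A) (C : Set A), lam a x ∈ starSpan (B : Set A) (C : Set A)) ∧
    (starSpan (B : Set A) (C : Set A)).Normal ∧
    (∀ x ∈ starSpan (B : Set A) (C : Set A), ∀ y ∈ starSpan (B : Set A) (C : Set A),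
      x + y = circ x y) ∧
    (∀ a : A, ∀ x ∈ starSpan (C : Set A) (B : Set A), lam a x ∈ starSpan (C : Set A) (B : Set A)) ∧
    (starSpan (C : Set A) (B : Set A)).Normal ∧
    (∀ x ∈ starSpan (C : Set A) (B : Set A), ∀ y ∈ starSpan (C : Set A) (B : Set A),
      x + y = circ x y) := by
  have hfact' : ∀ a : A, ∃ c ∈ C, ∃ b ∈ B, a = c + b := by
    intro a
    obtain ⟨b, hb, c, hc, e⟩ := hfact (-a)
    refine ⟨-c, C.neg_mem hc, -b, B.neg_mem hb, ?_⟩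
    rw [← neg_add_rev, ← e, neg_neg]
  obtain ⟨h1, h2, h3⟩ := half7 B C hC hBtriv hCtriv hfact hfact'
  obtain ⟨h4, h5, h6⟩ := half7 C B hB hCtriv hBtriv hfact' hfact
  exact ⟨h1, h2, h3, h4, h5, h6⟩
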